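/- Let X be a Banach space with a Schauder basis (e_i). If ‖s_1 + s_2‖ = 2 whenever (s_n) is a spreading model of any normalized block basis of (e_i), then X contains a closed infinite-dimensional subspace isomorphic to ℓ₁. -/

import Mathlib

/-!
The proof replaces normalized block sequences by *block ultrafilters*: bounded ultrafilters `B` on `X`
that contain every tail span `[e_i : i ≥ n]`. A coefficient `a` and such a `B` give an operator
`(T_a F)(w) = lim_v F (w + a v)` on nonexpansive functions `F`, and iterated limits of norms are
compositions of these operators applied to the norm. The function `w ↦ lim_v ‖w + v‖` is the type of
`B`, and its value at `0` is the limit norm `B.nu`.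

* The Brunel-Sucheston construction (`pairHyp_of_spreading`) realizes the iterated limits of a
  normalized block ultrafilter as the norm of a spreading model of a normalized block basis. Hence the
  hypothesis says that `lim_v lim_v' ‖v + v'‖ = 2` for every normalized `B` (`PairHyp`), and
  consequently `lim_v lim_v' ‖a v + b v'‖ = a + b` for `a, b ≥ 0`: convex convolutions of normalized
  block ultrafilters are again normalized.
* Start with the law of a multiple of `e_i` whose differences have full limit norm (`exists_start`).
  Averaging the differences over longer and longer alternating sums preserves normalization by
  `PairHyp`, and in the limit produces a symmetric type, since changing all the signs only shifts the
  alternating sum by one place (`exists_sym`).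
* Among the symmetric normalized types there is a minimal one (`exists_minimal_sym`). Convolving it
  with weights `a + b = 1` and symmetrizing again makes it smaller, so by minimality nothing changes:
  `T_a T_b ‖·‖ = T_{|a| + |b|} ‖·‖` (`exists_ell_one_type`).
* A sequence selected recursively from this ultrafilter, with errors controlled uniformly over compact
  sets of coefficients (`select`), is equivalent to the unit vector basis of `ℓ₁`
  (`exists_embedding`).

The basis constant, needed to see that spreading models are basic sequences and that the differences
at the start are nonzero, comes from the open mapping theorem (`exists_basis_const`).
-/

noncomputable section

/-- A basic sequence: there is a constant `C` dominating all projections onto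
initial segments. -/
def IsBasicSeq {S : Type*} [NormedAddCommGroup S] [NormedSpace ℝ S] (s : ℕ → S) : Prop :=
  ∃ C : ℝ, ∀ m n : ℕ, m ≤ n → ∀ a : ℕ → ℝ,
    ‖∑ i ∈ Finset.range m, a i • s i‖ ≤ C * ‖∑ i ∈ Finset.range n, a i • s i‖

/-- `s` is a spreading model of `x`. -/
def IsSpreadingModel {X : Type*} [NormedAddCommGroup X] [NormedSpace ℝ X]
    {S : Type*} [NormedAddCommGroup S] [NormedSpace ℝ S]
    (x : ℕ → X) (s : ℕ → S) : Prop :=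
  IsBasicSeq s ∧
  ∃ ε : ℕ → ℝ, (∀ n, 0 < ε n) ∧ Antitone ε ∧ Filter.Tendsto ε Filter.atTop (nhds 0) ∧
    ∀ (n : ℕ) (a : Fin n → ℝ), (∀ i, |a i| ≤ 1) →
      ∀ k : Fin n → ℕ, StrictMono k → (∀ i, n ≤ k i) →
        |‖∑ i, a i • x (k i)‖ - ‖∑ i, a i • s i‖| < ε n

/-- `e` is a Schauder basis of `X`: every vector has a unique representation as a
norm-convergent series. -/
def IsSchauderBasis {X : Type*} [NormedAddCommGroup X] [NormedSpace ℝ X] (e : ℕ → X) : Prop :=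
  ∀ x : X, ∃! a : ℕ → ℝ,
    Filter.Tendsto (fun n => ∑ i ∈ Finset.range n, a i • e i) Filter.atTop (nhds x)

/-- `y` is a block basis of the basis `e`: `y j = ∑_{i ∈ E j} a i • e i` with the
finite sets `E j` nonempty and successive (`max E j < min E (j+1)`), and `y j ≠ 0`. -/
def IsBlockBasis {X : Type*} [NormedAddCommGroup X] [NormedSpace ℝ X]
    (e : ℕ → X) (y : ℕ → X) : Prop :=
  ∃ (E : ℕ → Finset ℕ) (a : ℕ → ℝ),
    (∀ j, (E j).Nonempty) ∧
    (∀ j, ∀ p ∈ E j, ∀ q ∈ E (j + 1), p < q) ∧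
    (∀ j, y j = ∑ i ∈ E j, a i • e i) ∧
    (∀ j, y j ≠ 0)

open Filter Topology

/-! ### Block ultrafilters, operators and types -/

section Types

/-- A bounded real function converges along an ultrafilter. -/
theorem ultra_tendsto {α : Type*} (U : Ultrafilter α) (f : α → ℝ) {R : ℝ}
    (h : ∀ᶠ v in (U : Filter α), |f v| ≤ R) : Tendsto f U (𝓝 (limUnder (U : Filter α) f)) := by
  refine tendsto_nhds_limUnder ?_
  obtain ⟨x, _, hx⟩ := (isCompact_Icc (a := -R) (b := R)).ultrafilter_le_nhds (U.map f) (by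
    rw [le_principal_iff]
    exact h.mono fun v hv => abs_le.1 hv)
  exact ⟨x, hx⟩

/-- An iterated limit is a limit along the monadic bind of the ultrafilters. -/
theorem tendsto_ultra_bind {α β : Type*} (U : Ultrafilter α) (m : α → Ultrafilter β)
    {f : β → ℝ} {g : α → ℝ} {c : ℝ} (h1 : ∀ v, Tendsto f (m v) (𝓝 (g v)))
    (h2 : Tendsto g U (𝓝 c)) : Tendsto f (U.bind m) (𝓝 c) := by
  rw [Metric.tendsto_nhds] at h2 ⊢
  intro ε hε
  have h3 : ∀ᶠ v in (U : Filter α), ∀ᶠ x in (m v : Filter β), dist (f x) c < ε := by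
    filter_upwards [h2 (ε / 2) (half_pos hε)] with v hv
    filter_upwards [(Metric.tendsto_nhds.1 (h1 v)) (ε / 2) (half_pos hε)] with x hx
    linarith [dist_triangle (f x) (g v) c]
  exact h3

variable {X : Type*} [NormedAddCommGroup X] [NormedSpace ℝ X]

/-- Nonexpansive real functions on `X`. -/
def Lip1 (X : Type*) [NormedAddCommGroup X] := {F : X → ℝ // ∀ x y, |F x - F y| ≤ ‖x - y‖}

namespace Lip1

/-- The norm as a nonexpansive function. -/
def nrm (X : Type*) [NormedAddCommGroup X] : Lip1 X := ⟨fun x => ‖x‖, abs_norm_sub_norm_le⟩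

/-- The reflection `w ↦ F (-w)`. -/
def refl (F : Lip1 X) : Lip1 X := ⟨fun w => F.1 (-w), fun x y => by
  have := F.2 (-x) (-y)
  rwa [neg_sub_neg, norm_sub_rev] at this⟩

/-- The dilation `w ↦ c * F (c⁻¹ w)`; it fixes the norm. -/
def dil (c : ℝ) (hc : 0 < c) (F : Lip1 X) : Lip1 X := ⟨fun w => c * F.1 (c⁻¹ • w), fun x y => by
  have := F.2 (c⁻¹ • x) (c⁻¹ • y)
  rw [← smul_sub, norm_smul, Real.norm_of_nonneg (inv_nonneg.2 hc.le)] at this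
  rw [← mul_sub, abs_mul, abs_of_pos hc]
  calc _ ≤ c * (c⁻¹ * ‖x - y‖) := by gcongr
    _ = _ := by field_simp⟩

theorem ext {X : Type*} [NormedAddCommGroup X] {F G : Lip1 X} (h : ∀ w, F.1 w = G.1 w) :
    F = G := Subtype.ext (funext h)

theorem refl_nrm {X : Type*} [NormedAddCommGroup X] : (nrm X).refl = nrm X :=
  ext fun w => norm_neg w

theorem dil_nrm (c : ℝ) (hc : 0 < c) : (nrm X).dil c hc = nrm X := ext fun w => by
  simp only [dil, nrm, norm_smul, Real.norm_of_nonneg (inv_nonneg.2 hc.le)]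
  field_simp

end Lip1

/-- A bounded ultrafilter on `X` concentrated on every tail span `[e_i : i ≥ n]`.
It plays the role of a (generalized) bounded block sequence of `(e_i)`. -/
structure BlockUltra (e : ℕ → X) where
  /-- the underlying ultrafilter -/
  U : Ultrafilter X
  tail : ∀ n, ∀ᶠ v in (U : Filter X), v ∈ Submodule.span ℝ (e '' Set.Ici n)
  bdd : ∃ R, ∀ᶠ v in (U : Filter X), ‖v‖ ≤ R

namespace BlockUltra

open Lip1

variable {e : ℕ → X} (B : BlockUltra e)

theorem tendsto_aux (a : ℝ) (F : Lip1 X) (w : X) :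
    Tendsto (fun v => F.1 (w + a • v)) B.U
      (𝓝 (limUnder (B.U : Filter X) fun v => F.1 (w + a • v))) := by
  obtain ⟨R, hR⟩ := B.bdd
  refine ultra_tendsto B.U _ (R := |F.1 w| + |a| * R) ?_
  filter_upwards [hR] with v hv
  have h1 := F.2 (w + a • v) w
  rw [add_sub_cancel_left, norm_smul, Real.norm_eq_abs] at h1
  have h2 := mul_le_mul_of_nonneg_left hv (abs_nonneg a)
  have h3 := abs_sub_abs_le_abs_sub (F.1 (w + a • v)) (F.1 w)
  linarith

/-- The averaging operator `(T_a F)(w) = lim_v F (w + a v)`, the limit being along the ultrafilter.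
Iterated limits along the ultrafilter are compositions of such operators. -/
def T (a : ℝ) (F : Lip1 X) : Lip1 X :=
  ⟨fun w => limUnder (B.U : Filter X) fun v => F.1 (w + a • v), fun x y => by
    refine le_of_tendsto ((B.tendsto_aux a F x).sub (B.tendsto_aux a F y)).abs
      (Eventually.of_forall fun v => ?_)
    simpa using F.2 (x + a • v) (y + a • v)⟩

theorem tendsto_T (a : ℝ) (F : Lip1 X) (w : X) :
    Tendsto (fun v => F.1 (w + a • v)) B.U (𝓝 ((B.T a F).1 w)) := B.tendsto_aux a F w

theorem T_eq {a : ℝ} {F : Lip1 X} {w : X} {c : ℝ}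
    (h : Tendsto (fun v => F.1 (w + a • v)) B.U (𝓝 c)) : (B.T a F).1 w = c :=
  tendsto_nhds_unique (B.tendsto_T a F w) h

theorem T_zero (F : Lip1 X) : B.T 0 F = F := Lip1.ext fun w => B.T_eq (by simp)

/-- The type `w ↦ lim_v ‖w + v‖`. -/
def ty : X → ℝ := (B.T 1 (nrm X)).1

/-- The limit of the norms `lim_v ‖v‖`. -/
def nu : ℝ := B.ty 0

theorem tendsto_ty (w : X) : Tendsto (fun v => ‖w + v‖) B.U (𝓝 (B.ty w)) := by
  have h := B.tendsto_T 1 (nrm X) w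
  simp only [one_smul] at h
  exact h

theorem tendsto_nu : Tendsto (fun v : X => ‖v‖) B.U (𝓝 B.nu) := by
  have h := B.tendsto_ty 0
  simp only [zero_add] at h
  exact h

theorem nu_nonneg : 0 ≤ B.nu :=
  ge_of_tendsto B.tendsto_nu (Eventually.of_forall fun v => norm_nonneg v)

theorem T_sub_le (a b : ℝ) {F G : Lip1 X} {c : ℝ} (h : ∀ w, |F.1 w - G.1 w| ≤ c) (w : X) :
    |(B.T a F).1 w - (B.T b G).1 w| ≤ |a - b| * B.nu + c := by
  refine le_of_tendsto_of_tendsto ((B.tendsto_T a F w).sub (B.tendsto_T b G w)).abs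
      ((B.tendsto_nu.const_mul _).add_const c) (Eventually.of_forall fun v => ?_)
  have h1 := F.2 (w + a • v) (w + b • v)
  have h2 := h (w + b • v)
  rw [add_sub_add_left_eq_sub, ← sub_smul, norm_smul, Real.norm_eq_abs] at h1
  have h3 := abs_sub_le (F.1 (w + a • v)) (F.1 (w + b • v)) (G.1 (w + b • v))
  dsimp only
  linarith

theorem T_sub_le_self (a : ℝ) (F : Lip1 X) (w : X) : |(B.T a F).1 w - F.1 w| ≤ |a| * B.nu := by
  have := B.T_sub_le a 0 (F := F) (G := F) (c := 0) (by simp) w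
  rw [T_zero] at this
  simpa using this

theorem refl_T (a : ℝ) (F : Lip1 X) : (B.T a F).refl = B.T (-a) F.refl := by
  refine Lip1.ext fun w => ?_
  refine ((B.T_eq ?_).symm)
  refine (B.tendsto_T a F (-w)).congr fun v => ?_
  simp [Lip1.refl, add_comm]

theorem dil_T (c : ℝ) (hc : 0 < c) (a : ℝ) (F : Lip1 X) :
    (B.T a F).dil c hc = B.T (c * a) (F.dil c hc) := by
  refine Lip1.ext fun w => ?_
  refine ((B.T_eq ?_).symm)
  refine ((B.tendsto_T a F (c⁻¹ • w)).const_mul c).congr fun v => ?_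
  simp only [dil, smul_add, smul_smul]
  rw [inv_mul_cancel_left₀ hc.ne']

/-- The law of `a v + b v'`, where `v` and then `v'` are drawn from the ultrafilter. -/
def conv (a b : ℝ) : BlockUltra e where
  U := B.U.bind fun v => B.U.map fun v' => a • v + b • v'
  tail n := by
    have : ∀ᶠ v in (B.U : Filter X), ∀ᶠ v' in (B.U : Filter X),
        a • v + b • v' ∈ Submodule.span ℝ (e '' Set.Ici n) := by
      filter_upwards [B.tail n] with v hv
      filter_upwards [B.tail n] with v' hv'
      exact Submodule.add_mem _ (Submodule.smul_mem _ _ hv) (Submodule.smul_mem _ _ hv')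
    exact this
  bdd := by
    obtain ⟨R, hR⟩ := B.bdd
    refine ⟨|a| * R + |b| * R, ?_⟩
    have : ∀ᶠ v in (B.U : Filter X), ∀ᶠ v' in (B.U : Filter X),
        ‖a • v + b • v'‖ ≤ |a| * R + |b| * R := by
      filter_upwards [hR] with v hv
      filter_upwards [hR] with v' hv'
      refine (norm_add_le _ _).trans ?_
      rw [norm_smul, norm_smul, Real.norm_eq_abs, Real.norm_eq_abs]
      gcongr
    exact this

theorem T_conv (a b t : ℝ) (F : Lip1 X) :
    (B.conv a b).T t F = B.T (t * a) (B.T (t * b) F) := by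
  refine Lip1.ext fun w => (B.conv a b).T_eq ?_
  refine tendsto_ultra_bind B.U _ (fun v => ?_) (B.tendsto_T (t * a) (B.T (t * b) F) w)
  rw [Ultrafilter.coe_map, tendsto_map'_iff]
  refine (B.tendsto_T (t * b) F _).congr fun v' => ?_
  simp [smul_add, smul_smul, add_assoc]

theorem ty_conv (a b : ℝ) (w : X) : (B.conv a b).ty w = (B.T a (B.T b (nrm X))).1 w := by
  rw [ty, T_conv, one_mul, one_mul]

theorem nu_conv (a b : ℝ) : (B.conv a b).nu = (B.T a (B.T b (nrm X))).1 0 := B.ty_conv a b 0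

theorem ty_conv_le {a b : ℝ} (ha : 0 ≤ a) (hb : 0 ≤ b) (hab : a + b = 1) (w : X) :
    (B.conv a b).ty w ≤ B.ty w := by
  rw [ty_conv]
  have h1 : ∀ v, (B.T b (nrm X)).1 (w + a • v) ≤ a * ‖w + v‖ + b * B.ty w := by
    intro v
    refine le_of_tendsto_of_tendsto' (B.tendsto_T b (nrm X) _)
      (((B.tendsto_ty w).const_mul b).const_add _) fun v' => ?_
    have : w + a • v + b • v' = a • (w + v) + b • (w + v') := by
      rw [smul_add, smul_add]
      nth_rewrite 1 [← one_smul ℝ w]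
      rw [← hab, add_smul]; abel
    simp only [nrm]
    rw [this]
    refine (norm_add_le _ _).trans ?_
    rw [norm_smul, norm_smul, Real.norm_of_nonneg ha, Real.norm_of_nonneg hb]
  have h2 := le_of_tendsto_of_tendsto' (B.tendsto_T a _ w)
    (((B.tendsto_ty w).const_mul a).add_const _) h1
  rwa [← add_mul, hab, one_mul] at h2

/-- The types of normalized block ultrafilters are closed under pointwise limits along
ultrafilters. -/
theorem exists_limit {ι : Type*} (G : Ultrafilter ι) (m : ι → BlockUltra e)
    (hm : ∀ i, (m i).nu = 1) :
    ∃ V : BlockUltra e, ∀ w, Tendsto (fun i => (m i).ty w) G (𝓝 (V.ty w)) := by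
  have hb : ∀ i, ∀ᶠ v in ((m i).U : Filter X), ‖v‖ ≤ 2 := fun i =>
    ((m i).tendsto_nu.eventually_lt_const (by rw [hm]; norm_num)).mono fun v hv => hv.le
  let V : BlockUltra e :=
    { U := G.bind fun i => (m i).U
      tail := fun n => by
        have : ∀ᶠ i in (G : Filter ι), ∀ᶠ v in ((m i).U : Filter X),
          v ∈ Submodule.span ℝ (e '' Set.Ici n) := Eventually.of_forall fun i => (m i).tail n
        exact this
      bdd := ⟨2, by
        have : ∀ᶠ i in (G : Filter ι), ∀ᶠ v in ((m i).U : Filter X), ‖v‖ ≤ 2 :=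
          Eventually.of_forall hb
        exact this⟩ }
  refine ⟨V, fun w => ?_⟩
  have h1 : Tendsto (fun i => (m i).ty w) G
      (𝓝 (limUnder (G : Filter ι) fun i => (m i).ty w)) := by
    refine ultra_tendsto G _ (R := ‖w‖ + 1) (Eventually.of_forall fun i => ?_)
    have h2 := ((m i).T 1 (nrm X)).2 w 0
    have h3 : ((m i).T 1 (nrm X)).1 0 = 1 := hm i
    rw [h3, sub_zero] at h2
    have h4 := abs_sub_abs_le_abs_sub (((m i).T 1 (nrm X)).1 w) 1
    rw [abs_one] at h4
    change |((m i).T 1 (nrm X)).1 w| ≤ _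
    linarith
  have h2 : Tendsto (fun v => ‖w + v‖) V.U (𝓝 (limUnder (G : Filter ι) fun i => (m i).ty w)) :=
    tendsto_ultra_bind G _ (fun i => (m i).tendsto_ty w) h1
  rwa [tendsto_nhds_unique (V.tendsto_ty w) h2]

end BlockUltra
end Types

/-! ### Symmetrization and minimal types -/

section Minimal
open Lip1
variable {X : Type*} [NormedAddCommGroup X] [NormedSpace ℝ X] {e : ℕ → X}

/-- Every normalized block ultrafilter satisfies `lim_v lim_v' ‖v + v'‖ = 2`. -/
def PairHyp (e : ℕ → X) : Prop :=
  ∀ B : BlockUltra e, B.nu = 1 → (B.T 1 (B.T 1 (nrm X))).1 0 = 2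

namespace BlockUltra

variable (B : BlockUltra e)

theorem T_T_le (hB : B.nu = 1) (a b : ℝ) : (B.T a (B.T b (nrm X))).1 0 ≤ |a| + |b| := by
  have h1 := B.T_sub_le b 0 (F := nrm X) (G := nrm X) (c := 0) (by simp)
  have h2 := B.T_sub_le a 0 h1 0
  rw [T_zero, T_zero] at h2
  have h3 := (abs_le.1 h2).2
  simp only [nrm, norm_zero, sub_zero, hB, mul_one, add_zero] at h3
  exact h3

/-- For one ultrafilter, the pair hypothesis extends to all coefficients in `[0, 1]` because
`‖v + v'‖` being almost `2` leaves no room for a loss in `‖a v + b v'‖`. -/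
theorem T_T_eq (H : PairHyp e) (hB : B.nu = 1) {a b : ℝ} (ha : 0 ≤ a) (ha1 : a ≤ 1) (hb : 0 ≤ b)
    (hb1 : b ≤ 1) : (B.T a (B.T b (nrm X))).1 0 = a + b := by
  refine le_antisymm ?_ ?_
  · simpa [abs_of_nonneg ha, abs_of_nonneg hb] using B.T_T_le hB a b
  · have h1 := B.T_sub_le 1 b (F := nrm X) (G := nrm X) (c := 0) (by simp)
    have h2 := (abs_le.1 (B.T_sub_le 1 a h1 0)).2
    rw [H B hB, hB, abs_of_nonneg (by linarith), abs_of_nonneg (by linarith)] at h2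
    linarith

theorem nu_conv_eq (H : PairHyp e) (hB : B.nu = 1) {a b : ℝ} (ha : 0 ≤ a) (hb : 0 ≤ b)
    (hab : a + b = 1) : (B.conv a b).nu = 1 := by
  rw [nu_conv, B.T_T_eq H hB ha (by linarith) hb (by linarith), hab]

/-- One step of an alternating iterated limit, `F ↦ T_a (T_{-a} F)`. -/
def P (a : ℝ) (F : Lip1 X) : Lip1 X := B.T a (B.T (-a) F)

theorem P_iter_sub_le (a : ℝ) (M : ℕ) {F G : Lip1 X} {c : ℝ} (h : ∀ w, |F.1 w - G.1 w| ≤ c) :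
    ∀ w, |((B.P a)^[M] F).1 w - ((B.P a)^[M] G).1 w| ≤ c := by
  induction M generalizing F G with
  | zero => exact h
  | succ M ih =>
    refine ih fun w => ?_
    have h1 : ∀ w, |(B.T (-a) F).1 w - (B.T (-a) G).1 w| ≤ c := fun w => by
      simpa using B.T_sub_le (-a) (-a) h w
    have h2 := B.T_sub_le a a h1 w
    rw [sub_self, abs_zero, zero_mul, zero_add] at h2
    exact h2

/-- Alternating averages are almost symmetric: reflecting one amounts to shifting it by one
place, which changes only its two ends. -/
theorem P_iter_symm (a : ℝ) (M : ℕ) (w : X) :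
    |((B.P a)^[M] (nrm X)).1 (-w) - ((B.P a)^[M] (nrm X)).1 w| ≤ 2 * |a| * B.nu := by
  have hr : Function.Semiconj (Lip1.refl (X := X)) (B.P a) (B.P (-a)) := fun F => by
    simp only [P, refl_T]
  have hs : Function.Semiconj (B.T (-a)) (B.P a) (B.P (-a)) := fun F => by
    simp only [P, neg_neg]
  have h1 : ((B.P a)^[M] (nrm X)).1 (-w) = ((B.P (-a))^[M] (nrm X)).1 w := by
    have := (hr.iterate_right M) (nrm X)
    rw [refl_nrm] at this
    rw [← this]; rfl
  have h2 := B.P_iter_sub_le (-a) M (B.T_sub_le_self (-a) (nrm X)) w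
  rw [← (hs.iterate_right M) (nrm X)] at h2
  have h3 := B.T_sub_le_self (-a) ((B.P a)^[M] (nrm X)) w
  rw [h1]
  rw [abs_neg] at h2 h3
  rw [abs_le] at *
  constructor <;> linarith [h2.1, h2.2, h3.1, h3.2]

/-- The law of the normalized alternating sums of `2 ^ (k + 1)` terms. -/
def alt : ℕ → BlockUltra e
  | 0 => B.conv (1 / 2) (-(1 / 2))
  | k + 1 => (alt k).conv (1 / 2) (1 / 2)

theorem T_alt (k : ℕ) (t : ℝ) (F : Lip1 X) :
    (B.alt k).T t F = (B.P (t * (1 / 2) ^ (k + 1)))^[2 ^ k] F := by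
  induction k generalizing t F with
  | zero => simp [alt, T_conv, P]
  | succ k ih =>
    rw [alt, T_conv, ih, ih, pow_succ 2 k, mul_two, Function.iterate_add_apply]
    have : t * (1 / 2) * (1 / 2) ^ (k + 1) = t * (1 / 2) ^ (k + 1 + 1) := by ring
    rw [this]

/-- The two-fold averages `alt (k + 1)` of `alt k` stay normalized under the pair hypothesis. -/
theorem nu_alt (H : PairHyp e) (hB : (B.T (1 / 2) (B.T (-(1 / 2)) (nrm X))).1 0 = 1) (k : ℕ) :
    (B.alt k).nu = 1 := by
  induction k with
  | zero => rw [alt, nu_conv, hB]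
  | succ k ih => exact (B.alt k).nu_conv_eq H ih (by norm_num) (by norm_num) (by norm_num)

/-- Alternating averages of `w + v` and `-(-w + v)` only decrease the type, by convexity. -/
theorem ty_alt_le (k : ℕ) (w : X) : (B.alt k).ty w ≤ (B.ty w + B.ty (-w)) / 2 := by
  induction k with
  | zero =>
    rw [alt, ty_conv]
    have h1 : ∀ v, (B.T (-(1 / 2)) (nrm X)).1 (w + (1 / 2 : ℝ) • v)
        ≤ 1 / 2 * ‖w + v‖ + 1 / 2 * B.ty (-w) := by
      intro v
      refine le_of_tendsto_of_tendsto' (B.tendsto_T _ (nrm X) _)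
        (((B.tendsto_ty (-w)).const_mul (1 / 2)).const_add _) fun v' => ?_
      have : w + (1 / 2 : ℝ) • v + (-(1 / 2) : ℝ) • v'
          = (1 / 2 : ℝ) • (w + v) + (-(1 / 2) : ℝ) • (-w + v') := by
        module
      simp only [nrm]
      rw [this]
      refine (norm_add_le _ _).trans ?_
      rw [norm_smul, norm_smul]
      norm_num
    have h2 := le_of_tendsto_of_tendsto' (B.tendsto_T (1 / 2) _ w)
      (((B.tendsto_ty w).const_mul (1 / 2)).add_const _) h1
    linarith
  | succ k ih =>
    exact ((B.alt k).ty_conv_le (by norm_num) (by norm_num) (by norm_num) w).trans ih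

/-- Normalized block ultrafilters with a symmetric type. -/
def Sym : Prop := B.nu = 1 ∧ ∀ w, B.ty (-w) = B.ty w

/-- Symmetrization: the limit of the alternating averages is normalized and symmetric, and its type
is dominated by the symmetrized original type. -/
theorem exists_sym (H : PairHyp e) (hB : (B.T (1 / 2) (B.T (-(1 / 2)) (nrm X))).1 0 = 1) :
    ∃ V : BlockUltra e, V.Sym ∧ ∀ w, V.ty w ≤ (B.ty w + B.ty (-w)) / 2 := by
  obtain ⟨V, hV⟩ := exists_limit (hyperfilter ℕ) B.alt (B.nu_alt H hB)
  refine ⟨V, ⟨?_, fun w => ?_⟩, fun w => ?_⟩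
  · refine tendsto_nhds_unique (hV 0) (tendsto_const_nhds.congr fun k => ?_)
    exact (B.nu_alt H hB k).symm
  · have h1 := ((hV (-w)).sub (hV w)).abs
    have h2 : Tendsto (fun k : ℕ => 2 * |(1 / 2 : ℝ) ^ (k + 1)| * B.nu)
        (hyperfilter ℕ : Filter ℕ) (𝓝 0) := by
      refine Tendsto.mono_left ?_ Nat.hyperfilter_le_atTop
      have h3 := (tendsto_pow_atTop_nhds_zero_of_lt_one (r := (1 / 2 : ℝ)) (by norm_num)
        (by norm_num)).comp (tendsto_add_atTop_nat 1)
      have h4 := (h3.abs.const_mul 2).mul_const B.nu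
      simpa using h4
    have h3 := le_of_tendsto_of_tendsto' h1 h2 fun k => by
      have := B.P_iter_symm ((1 / 2) ^ (k + 1)) (2 ^ k) w
      simpa only [ty, T_alt, one_mul] using this
    exact sub_eq_zero.1 (abs_eq_zero.1 (le_antisymm h3 (abs_nonneg _)))
  · exact le_of_tendsto (hV w) (Eventually.of_forall fun k => B.ty_alt_le k w)

/-- A minimal symmetric normalized type exists, by Zorn's lemma: a chain of types decreases to its
limit along an ultrafilter, which is again such a type. -/
theorem exists_minimal_sym (h : ∃ V : BlockUltra e, V.Sym) :
    ∃ V : BlockUltra e, V.Sym ∧ ∀ W : BlockUltra e, W.Sym → (∀ w, W.ty w ≤ V.ty w) →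
      ∀ w, V.ty w ≤ W.ty w := by
  let K := {V : BlockUltra e // V.Sym}
  let r : K → K → Prop := fun A A' => ∀ w, A'.1.ty w ≤ A.1.ty w
  have hK : Nonempty K := let ⟨V, hV⟩ := h; ⟨⟨V, hV⟩⟩
  have htr : ∀ {A A' A'' : K}, r A A' → r A' A'' → r A A'' := fun h1 h2 w => (h2 w).trans (h1 w)
  have hch : ∀ c : Set K, IsChain r c → c.Nonempty → ∃ ub, ∀ A ∈ c, r A ub := by
    intro c hc hne
    have hcn : Nonempty c := hne.to_subtype
    let f : Filter c := ⨅ A : c, 𝓟 {A' : c | r A.1 A'.1}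
    have hf : f.NeBot := by
      refine iInf_neBot_of_directed (fun A A' => ?_) fun A =>
        principal_neBot_iff.2 ⟨A, fun w => le_rfl⟩
      rcases eq_or_ne A A' with rfl | hAA
      · exact ⟨A, le_rfl, le_rfl⟩
      · rcases hc A.2 A'.2 (fun h => hAA (Subtype.ext h)) with h1 | h1
        · exact ⟨A', principal_mono.2 fun x hx => htr h1 hx, le_rfl⟩
        · exact ⟨A, le_rfl, principal_mono.2 fun x hx => htr h1 hx⟩
    obtain ⟨V, hV⟩ := exists_limit (Ultrafilter.of f) (fun A : c => A.1.1) fun A => A.1.2.1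
    have hV1 : V.nu = 1 :=
      tendsto_nhds_unique (hV 0) (tendsto_const_nhds.congr fun A => A.1.2.1.symm)
    have hV2 : ∀ w, V.ty (-w) = V.ty w := fun w =>
      tendsto_nhds_unique (hV (-w)) ((hV w).congr fun A => (A.1.2.2 w).symm)
    refine ⟨⟨V, hV1, hV2⟩, fun A hA w => ?_⟩
    refine le_of_tendsto (hV w) ?_
    have h1 : {A' : c | r A A'.1} ∈ f :=
      mem_iInf_of_mem (f := fun A : c => 𝓟 {A' : c | r A.1 A'.1}) ⟨A, hA⟩ (mem_principal_self _)
    have h2 : ∀ᶠ A' in ((Ultrafilter.of f : Ultrafilter c) : Filter c), r A A'.1 :=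
      Ultrafilter.of_le f h1
    exact h2.mono fun A' hA' => hA' w
  obtain ⟨m, hm⟩ := exists_maximal_of_nonempty_chains_bounded hch htr
  exact ⟨m.1, m.2, fun W hW hWm => hm ⟨W, hW⟩ hWm⟩

theorem T_neg_eq (hB : B.Sym) (a : ℝ) (w : X) :
    (B.T a (nrm X)).1 (-w) = (B.T a (nrm X)).1 w := by
  have key : ∀ a : ℝ, 0 < a → ∀ w, (B.T a (nrm X)).1 w = a * B.ty (a⁻¹ • w) := fun a ha w => by
    have := B.dil_T a ha 1 (nrm X)
    rw [dil_nrm, mul_one] at this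
    rw [← this]; rfl
  have hpos : ∀ a : ℝ, 0 < a → ∀ w, (B.T a (nrm X)).1 (-w) = (B.T a (nrm X)).1 w :=
    fun a ha w => by rw [key a ha, key a ha, smul_neg, hB.2]
  have hr : ∀ a : ℝ, ∀ w, (B.T a (nrm X)).1 (-w) = (B.T (-a) (nrm X)).1 w := fun a w => by
    have := B.refl_T a (nrm X)
    rw [refl_nrm] at this
    rw [← this]; rfl
  rcases lt_trichotomy a 0 with ha | rfl | ha
  · have h1 := hr (-a) (-w)
    have h2 := hr (-a) w
    have h3 := hpos (-a) (by linarith) w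
    simp only [neg_neg] at h1 h2
    rw [← h1, ← h2, h3]
  · rw [T_zero]; exact norm_neg w
  · exact hpos a ha w

theorem T_neg_coeff (hB : B.Sym) (a : ℝ) : B.T (-a) (nrm X) = B.T a (nrm X) := by
  have := B.refl_T a (nrm X)
  rw [refl_nrm] at this
  rw [← this]
  exact Lip1.ext fun w => B.T_neg_eq hB a w

theorem T_abs_coeff (hB : B.Sym) (a : ℝ) : B.T |a| (nrm X) = B.T a (nrm X) := by
  rcases abs_choice a with h | h
  · rw [h]
  · rw [h, T_neg_coeff B hB]

/-- Convex convolutions of a symmetric ultrafilter can be symmetrized again: the four-fold iterated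
limit with signs `+ + - -` is full, as this sign pattern occurs (with gaps) in an alternating sum of
eight terms, whose limit norm is full. -/
theorem sym_four (H : PairHyp e) (hB : B.Sym) {a b : ℝ} (ha : 0 ≤ a) (hb : 0 ≤ b)
    (hab : a + b = 1) :
    ((B.conv a b).T (1 / 2) ((B.conv a b).T (-(1 / 2)) (nrm X))).1 0 = 1 := by
  have hZ := B.nu_conv_eq H hB.1 ha hb hab
  refine le_antisymm ?_ ?_
  · refine ((B.conv a b).T_T_le hZ _ _).trans ?_
    norm_num
  have h0 : (B.T (1 / 2) (B.T (-(1 / 2)) (nrm X))).1 0 = 1 := by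
    rw [T_neg_coeff B hB, B.T_T_eq H hB.1] <;> norm_num
  have h8 := B.nu_alt H h0 2
  rw [nu, ty, T_alt] at h8
  norm_num [P] at h8
  rw [T_conv, T_conv]
  -- among the signs `+ - + - + - + -`, keep the first, third, fourth and sixth with weights `a, b, a, b`
  -- and drop the rest; the loss in norm is at most the total change of the coefficients
  have i0 : ∀ w, |(nrm X).1 w - (nrm X).1 w| ≤ 0 := by simp
  have i1 := B.T_sub_le (-(1 / 8)) 0 i0
  have i2 := B.T_sub_le (1 / 8) 0 i1
  have i3 := B.T_sub_le (-(1 / 8)) (-(1 / 8) * b) i2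
  have i4 := B.T_sub_le (1 / 8) 0 i3
  have i5 := B.T_sub_le (-(1 / 8)) (-(1 / 8) * a) i4
  have i6 := B.T_sub_le (1 / 8) (1 / 8 * b) i5
  have i7 := B.T_sub_le (-(1 / 8)) 0 i6
  have i8 := (abs_le.1 (B.T_sub_le (1 / 8) (1 / 8 * a) i7 0)).2
  have e1 : ∀ c : ℝ, c ≤ 1 → |1 / 8 - 1 / 8 * c| = 1 / 8 - 1 / 8 * c := fun c hc =>
    abs_of_nonneg (by linarith)
  have e2 : ∀ c : ℝ, c ≤ 1 → |-(1 / 8) - -(1 / 8) * c| = 1 / 8 - 1 / 8 * c := fun c hc => by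
    rw [← abs_neg, ← e1 c hc]; congr 1; ring
  have e3 : |(1 / 8 : ℝ) - 0| = 1 / 8 := by norm_num
  have e4 : |-(1 / 8 : ℝ) - 0| = 1 / 8 := by norm_num
  rw [e1 a (by linarith), e2 a (by linarith), e1 b (by linarith), e2 b (by linarith), e3, e4,
    hB.1] at i8
  simp only [T_zero] at i8
  -- rescale by a factor of four
  have c1 : ∀ c : ℝ, (4 : ℝ) * (1 / 8 * c) = 1 / 2 * c := fun c => by ring
  have c2 : ∀ c : ℝ, (4 : ℝ) * (-(1 / 8) * c) = -(1 / 2) * c := fun c => by ring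
  have h9 : (B.T (1 / 8 * a) (B.T (1 / 8 * b)
      (B.T (-(1 / 8) * a) (B.T (-(1 / 8) * b) (nrm X))))).dil 4 (by norm_num)
      = B.T (1 / 2 * a) (B.T (1 / 2 * b)
        (B.T (-(1 / 2) * a) (B.T (-(1 / 2) * b) (nrm X)))) := by
    rw [dil_T, dil_T, dil_T, dil_T, dil_nrm, c1, c1, c2, c2]
  rw [← h9]
  simp only [dil, smul_zero]
  norm_num at i8
  rw [h8] at i8
  norm_num
  linarith

/-- Some normalized block ultrafilter has operators that compose as for the unit vector basis of `ℓ₁`.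
Indeed, if `B` has a minimal symmetric type and `a + b = 1` with `a, b ≥ 0`, then `B.conv a b` has a
smaller type and so has its symmetrization; by minimality all these types coincide. -/
theorem exists_ell_one_type (H : PairHyp e)
    (h0 : ∃ Z : BlockUltra e, (Z.T (1 / 2) (Z.T (-(1 / 2)) (nrm X))).1 0 = 1) :
    ∃ B : BlockUltra e, B.nu = 1 ∧
      ∀ a b : ℝ, B.T a (B.T b (nrm X)) = B.T (|a| + |b|) (nrm X) := by
  obtain ⟨Z, hZ⟩ := h0
  obtain ⟨B, hB, hmin⟩ := exists_minimal_sym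
    (let ⟨V, hV, _⟩ := Z.exists_sym H hZ; ⟨V, hV⟩)
  refine ⟨B, hB.1, ?_⟩
  have h1 : ∀ a b : ℝ, 0 ≤ a → 0 ≤ b → a + b = 1 →
      B.T a (B.T b (nrm X)) = B.T 1 (nrm X) := by
    intro a b ha hb hab
    obtain ⟨V, hV, hVle⟩ := (B.conv a b).exists_sym H (B.sym_four H hB ha hb hab)
    have h2 := fun w => B.ty_conv_le ha hb hab w
    have h3 := hmin V hV fun w => by linarith [hVle w, h2 w, h2 (-w), hB.2 w]
    refine Lip1.ext fun w => ?_
    rw [← B.ty_conv]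
    change _ = B.ty w
    linarith [hVle w, h2 w, h2 (-w), hB.2 w, h3 w]
  have h2 : ∀ a b : ℝ, 0 ≤ a → 0 ≤ b → B.T a (B.T b (nrm X)) = B.T (a + b) (nrm X) := by
    intro a b ha hb
    rcases (add_nonneg ha hb).eq_or_lt with h | h
    · have ha0 : a = 0 := by linarith
      have hb0 : b = 0 := by linarith
      simp [ha0, hb0, T_zero]
    · have h3 := h1 (a / (a + b)) (b / (a + b)) (by positivity) (by positivity) (by field_simp)
      have h4 := congrArg (Lip1.dil (a + b) h) h3
      simp only [dil_T, dil_nrm, mul_one, mul_div_cancel₀ _ h.ne'] at h4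
      exact h4
  have h3 : ∀ a b : ℝ, 0 ≤ b → B.T a (B.T b (nrm X)) = B.T (|a| + b) (nrm X) := by
    intro a b hb
    rcases abs_choice a with h | h
    · rw [h, h2 a b (h ▸ abs_nonneg a) hb]
    · have h4 := h2 (-a) b (h ▸ abs_nonneg a) hb
      have h5 := congrArg Lip1.refl h4
      simp only [refl_T, refl_nrm, neg_neg] at h5
      rw [T_neg_coeff B hB, T_neg_coeff B hB] at h5
      rw [h5, h]
  intro a b
  rw [← B.T_abs_coeff hB b, h3 a |b| (abs_nonneg b)]

end BlockUltra
end Minimal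

/-! ### The basis constant -/

section BasisConstant
variable {X : Type*} [NormedAddCommGroup X] [NormedSpace ℝ X]

/-- The space of convergent sequences `f 0 = 0, f 1, f 2, …` in `X` with `f (n + 1) - f n` a multiple
of `e n`, that is, of partial sums of convergent expansions along `e`. -/
def partialSums (e : ℕ → X) : Submodule ℝ C(OnePoint ℕ, X) where
  carrier := {f | f ((0 : ℕ) : OnePoint ℕ) = 0 ∧
    ∀ n : ℕ, f ((n + 1 : ℕ) : OnePoint ℕ) - f (n : OnePoint ℕ) ∈ Submodule.span ℝ {e n}}
  zero_mem' := by simp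
  add_mem' := by
    rintro f g ⟨hf, hf'⟩ ⟨hg, hg'⟩
    refine ⟨by simp [hf, hg], fun n => ?_⟩
    have := Submodule.add_mem _ (hf' n) (hg' n)
    rwa [sub_add_sub_comm] at this
  smul_mem' := by
    rintro c f ⟨hf, hf'⟩
    refine ⟨by simp [hf], fun n => ?_⟩
    have := Submodule.smul_mem _ c (hf' n)
    rwa [smul_sub] at this

theorem isClosed_partialSums (e : ℕ → X) : IsClosed (partialSums e : Set C(OnePoint ℕ, X)) := by
  have h1 : (partialSums e : Set C(OnePoint ℕ, X)) =
      {f | f ((0 : ℕ) : OnePoint ℕ) = 0} ∩ ⋂ n : ℕ, {f | f ((n + 1 : ℕ) : OnePoint ℕ) -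
        f (n : OnePoint ℕ) ∈ Submodule.span ℝ {e n}} := by
    ext f
    simp [partialSums]
  rw [h1]
  refine IsClosed.inter (isClosed_eq (by fun_prop) (by fun_prop)) (isClosed_iInter fun n => ?_)
  exact (Submodule.closed_of_finiteDimensional (Submodule.span ℝ {e n})).preimage (by fun_prop)

theorem exists_coeff {e : ℕ → X} {f : C(OnePoint ℕ, X)} (hf : f ∈ partialSums e) :
    ∃ a : ℕ → ℝ, ∀ n : ℕ, f (n : OnePoint ℕ) = ∑ i ∈ Finset.range n, a i • e i := by
  choose a ha using fun n => Submodule.mem_span_singleton.1 (hf.2 n)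
  refine ⟨a, fun n => ?_⟩
  induction n with
  | zero => simpa using hf.1
  | succ n ih => rw [Finset.sum_range_succ, ← ih, ha]; abel

/-- The partial-sum projections of a Schauder basis are uniformly bounded. By the open mapping
theorem the inverse of `f ↦ f ∞` from the Banach space of partial sums onto `X` is continuous. -/
theorem exists_basis_const [CompleteSpace X] {e : ℕ → X} (he : IsSchauderBasis e) :
    ∃ C : ℝ, ∀ (a : ℕ → ℝ) (x : X),
      Tendsto (fun n => ∑ i ∈ Finset.range n, a i • e i) atTop (𝓝 x) →
      ∀ n, ‖∑ i ∈ Finset.range n, a i • e i‖ ≤ C * ‖x‖ := by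
  have hcl : CompleteSpace (partialSums e) := (isClosed_partialSums e).completeSpace_coe
  let ev : partialSums e →L[ℝ] X :=
    (ContinuousMap.evalCLM ℝ (OnePoint.infty : OnePoint ℕ)).comp (partialSums e).subtypeL
  have hev : ∀ f, ev f = f.1 OnePoint.infty := fun f => rfl
  have hlim : ∀ f : C(OnePoint ℕ, X),
      Tendsto (fun n : ℕ => f (n : OnePoint ℕ)) atTop (𝓝 (f OnePoint.infty)) := fun f =>
    (OnePoint.continuous_iff_from_nat f).1 f.continuous
  have hinj : ev.ker = ⊥ := by
    rw [LinearMap.ker_eq_bot']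
    intro f hf
    replace hf : f.1 OnePoint.infty = 0 := hf
    obtain ⟨a, ha⟩ := exists_coeff f.2
    have h1 := hlim f.1
    simp only [ha] at h1
    rw [hf] at h1
    have h2 : a = 0 := (he 0).unique h1 (by simp)
    ext z
    induction z using OnePoint.rec with
    | infty => simpa using hf
    | coe n => simp [ha n, h2]
  have hmk : ∀ (a : ℕ → ℝ) (x : X) (h : Tendsto (fun n => ∑ i ∈ Finset.range n, a i • e i) atTop
      (𝓝 x)), OnePoint.continuousMapMkNat _ x h ∈ partialSums e := by
    intro a x h
    refine ⟨?_, fun n => ?_⟩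
    · change ∑ i ∈ Finset.range 0, a i • e i = 0
      simp
    · change ∑ i ∈ Finset.range (n + 1), a i • e i - ∑ i ∈ Finset.range n, a i • e i ∈ _
      rw [Finset.sum_range_succ, add_sub_cancel_left]
      exact Submodule.smul_mem _ _ (Submodule.mem_span_singleton_self _)
  have hsurj : ev.range = ⊤ := by
    rw [LinearMap.range_eq_top]
    intro x
    obtain ⟨a, ha, -⟩ := he x
    exact ⟨⟨_, hmk a x ha⟩, rfl⟩
  let Φ := ContinuousLinearEquiv.ofBijective ev hinj hsurj
  refine ⟨‖(Φ.symm : X →L[ℝ] partialSums e)‖, fun a x hx n => ?_⟩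
  have h1 : Φ.symm x = ⟨_, hmk a x hx⟩ := by
    rw [ContinuousLinearEquiv.symm_apply_eq]
    rfl
  have h2 := (Φ.symm : X →L[ℝ] partialSums e).le_opNorm x
  refine le_trans ?_ h2
  have h3 := ContinuousMap.norm_coe_le_norm (OnePoint.continuousMapMkNat _ x hx) (n : OnePoint ℕ)
  refine le_trans h3 (le_of_eq ?_)
  change _ = ‖Φ.symm x‖
  rw [h1]
  rfl

theorem linearCombination_eq_sum_range (e : ℕ → X) (c : ℕ →₀ ℝ) {n : ℕ}
    (hn : ∀ i, n ≤ i → c i = 0) :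
    Finsupp.linearCombination ℝ e c = ∑ i ∈ Finset.range n, c i • e i := by
  rw [Finsupp.linearCombination_apply]
  refine Finsupp.sum_of_support_subset _ (fun i hi => ?_) _ (by simp)
  by_contra h
  exact (Finsupp.mem_support_iff.1 hi) (hn i (by simpa using h))

/-- The basis constant controls the head of a sum of a head and a tail. -/
theorem exists_proj_const [CompleteSpace X] {e : ℕ → X} (he : IsSchauderBasis e) :
    ∃ C : ℝ, 0 < C ∧ ∀ (m : ℕ), ∀ x ∈ Submodule.span ℝ (e '' Set.Iio m),
      ∀ v ∈ Submodule.span ℝ (e '' Set.Ici m), ‖x‖ ≤ C * ‖x + v‖ := by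
  obtain ⟨C, hC⟩ := exists_basis_const he
  refine ⟨max C 1, by positivity, fun m x hx v hv => ?_⟩
  obtain ⟨c, hc, rfl⟩ := (Finsupp.mem_span_image_iff_linearCombination ℝ).1 hx
  obtain ⟨d, hd, rfl⟩ := (Finsupp.mem_span_image_iff_linearCombination ℝ).1 hv
  have hc0 : ∀ i, m ≤ i → c i = 0 := fun i hi => by
    by_contra h
    exact absurd (hc (Finsupp.mem_support_iff.2 h)) (by simpa using hi)
  have hd0 : ∀ i, i < m → d i = 0 := fun i hi => by
    by_contra h
    exact absurd (hd (Finsupp.mem_support_iff.2 h)) (by simpa using hi)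
  obtain ⟨N, hN⟩ := (c + d).support.exists_nat_subset_range
  have hN' : ∀ i, N ≤ i → (c + d) i = 0 := fun i hi => by
    by_contra h
    exact absurd (hN (Finsupp.mem_support_iff.2 h)) (by simpa using hi)
  have h1 : Tendsto (fun n => ∑ i ∈ Finset.range n, (c + d) i • e i) atTop
      (𝓝 (Finsupp.linearCombination ℝ e (c + d))) := by
    refine tendsto_atTop_of_eventually_const (i₀ := N) fun n hn => ?_
    exact (linearCombination_eq_sum_range e (c + d) fun i hi => hN' i (hn.trans hi)).symm
  have h2 := hC _ _ h1 m
  rw [← map_add, linearCombination_eq_sum_range e c hc0]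
  have h3 : ∑ i ∈ Finset.range m, c i • e i = ∑ i ∈ Finset.range m, (c + d) i • e i :=
    Finset.sum_congr rfl fun i hi => by
      rw [Finsupp.add_apply, hd0 i (Finset.mem_range.1 hi), add_zero]
  rw [h3]
  exact h2.trans (mul_le_mul_of_nonneg_right (le_max_left _ _) (norm_nonneg _))

theorem basis_ne_zero {e : ℕ → X} (he : IsSchauderBasis e) (i : ℕ) : e i ≠ 0 := by
  intro h
  have h1 : Tendsto (fun n => ∑ j ∈ Finset.range n, (0 : ℕ → ℝ) j • e j) atTop (𝓝 0) := by simp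
  have h2 : Tendsto (fun n => ∑ j ∈ Finset.range n, (Pi.single i 1 : ℕ → ℝ) j • e j) atTop
      (𝓝 0) := by
    refine tendsto_const_nhds.congr fun n => (Finset.sum_eq_zero fun j _ => ?_).symm
    rcases eq_or_ne j i with rfl | hj
    · simp [h]
    · simp [hj]
  have := congrFun ((he 0).unique h1 h2) i
  simp at this

end BasisConstant

/-! ### Selection of sequences -/

section Selection
open Lip1

/-- Recursive choice of a sequence, each term subject to a condition on its predecessors. -/
theorem seq_choice {X : Type*} [Zero X] {Q : ℕ → (ℕ → X) → X → Prop} (h : ∀ j p, ∃ v, Q j p v) :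
    ∃ y : ℕ → X, ∀ j, ∃ p : ℕ → X, (∀ i < j, p i = y i) ∧ Q j p (y j) := by
  choose g hg using h
  let st : ℕ → ℕ → X := fun n => Nat.rec 0 (fun j p => Function.update p j (g j p)) n
  have hst : ∀ j, st (j + 1) = Function.update (st j) j (g j (st j)) := fun j => rfl
  refine ⟨fun j => g j (st j), fun j => ⟨st j, ?_, hg j (st j)⟩⟩
  induction j with
  | zero => intro i hi; omega
  | succ j ih =>
    intro i hi
    rw [hst]
    rcases eq_or_ne i j with rfl | hij
    · simp
    · rw [Function.update_of_ne hij]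
      exact ih i (by omega)

variable {X : Type*} [NormedAddCommGroup X] [NormedSpace ℝ X] {e : ℕ → X}

namespace BlockUltra
variable (B : BlockUltra e)

theorem eventually_close {E : Type*} [TopologicalSpace E] {K : Set E} (hK : IsCompact K)
    {β : E → ℝ} (hβ : Continuous β) {F : E → Lip1 X}
    (hF : ∀ x, ∀ ε > 0, ∀ᶠ x' in 𝓝 x, ∀ w, |(F x').1 w - (F x).1 w| ≤ ε)
    {ω : E → X} (hω : Continuous ω) {ε : ℝ} (hε : 0 < ε) :
    ∀ᶠ v in (B.U : Filter X), ∀ x ∈ K,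
      |(F x).1 (ω x + β x • v) - (B.T (β x) (F x)).1 (ω x)| ≤ ε := by
  obtain ⟨R, hR⟩ := B.bdd
  have h1 : ∀ x ∈ K, {z : X × E | |(F z.2).1 (ω z.2 + β z.2 • z.1) -
      (B.T (β z.2) (F z.2)).1 (ω z.2)| ≤ ε} ∈ (B.U : Filter X) ×ˢ 𝓝 x := by
    intro x _
    have hδ : 0 < ε / 8 := by linarith
    have hη : 0 < ε / 8 / (|R| + B.nu + 1) := by
      have := B.nu_nonneg
      positivity
    have e1 := (Metric.tendsto_nhds.1 (B.tendsto_T (β x) (F x) (ω x))) _ hδ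
    have e2 := hF x _ hδ
    have e3 := (Metric.tendsto_nhds.1 (hβ.tendsto x)) _ hη
    have e4 := (Metric.tendsto_nhds.1 (hω.tendsto x)) _ hδ
    have e5 := (hR.and e1).prod_mk (e2.and (e3.and e4))
    refine mem_of_superset e5 ?_
    rintro ⟨v, x'⟩ ⟨⟨hv, hv1⟩, hx1, hx2, hx3⟩
    simp only [Set.mem_ofPred_eq] at *
    rw [Real.dist_eq] at hv1 hx2
    rw [dist_eq_norm] at hx3
    have d1 := hx1 (ω x' + β x' • v)
    have d2 := (F x).2 (ω x' + β x' • v) (ω x + β x • v)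
    have d3 : ‖ω x' + β x' • v - (ω x + β x • v)‖ ≤ ‖ω x' - ω x‖ + |β x' - β x| * |R| := by
      have : ω x' + β x' • v - (ω x + β x • v) = (ω x' - ω x) + (β x' - β x) • v := by
        rw [sub_smul]; abel
      rw [this]
      refine (norm_add_le _ _).trans ?_
      rw [norm_smul, Real.norm_eq_abs]
      gcongr
      exact hv.trans (le_abs_self R)
    have d4 := B.T_sub_le (β x') (β x) hx1 (ω x')
    have d5 := (B.T (β x) (F x)).2 (ω x') (ω x)
    have d6 : |β x' - β x| * |R| + |β x' - β x| * B.nu ≤ ε / 8 := by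
      rw [lt_div_iff₀ (by have := B.nu_nonneg; positivity)] at hx2
      nlinarith [abs_nonneg (β x' - β x)]
    rw [abs_le] at *
    rw [abs_lt] at hv1
    constructor <;> linarith [d1.1, d1.2, d2.1, d2.2, d4.1, d4.2, d5.1, d5.2, hv1.1, hv1.2]
  have h2 := hK.mem_prod_nhdsSet_of_forall h1
  have h3 : ∀ᶠ z in (B.U : Filter X) ×ˢ 𝓟 K, |(F z.2).1 (ω z.2 + β z.2 • z.1) -
      (B.T (β z.2) (F z.2)).1 (ω z.2)| ≤ ε :=
    (prod_mono le_rfl principal_le_nhdsSet) h2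
  exact eventually_prod_principal_iff.1 h3

/-- Selection of a sequence `y` from a block ultrafilter along which one application of an operator
`T_β` is realized by the next term of `y`, uniformly over bounded combinations of the previous
terms and compact families of parameters. The sequence may be subjected to further conditions
`Bd` that hold almost surely. -/
theorem select {E : Type*} [TopologicalSpace E] {P : ℕ → Set E} (hP : ∀ j, IsCompact (P j))
    {β : E → ℝ} (hβ : Continuous β) {F : E → Lip1 X}
    (hF : ∀ x, ∀ ε > 0, ∀ᶠ x' in 𝓝 x, ∀ w, |(F x').1 w - (F x).1 w| ≤ ε)
    {Bd : ℕ → (ℕ → X) → X → Prop} (hBd : ∀ j p, ∀ᶠ v in (B.U : Filter X), Bd j p v)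
    (hBd' : ∀ j p p' v, (∀ i < j, p i = p' i) → Bd j p v → Bd j p' v) :
    ∃ y : ℕ → X, (∀ j, Bd j y (y j)) ∧
      ∀ j, ∀ c : ℕ → ℝ, (∀ i, |c i| ≤ 1) → ∀ x ∈ P j,
        |(F x).1 (∑ i ∈ Finset.range j, c i • y i + β x • y j) -
          (B.T (β x) (F x)).1 (∑ i ∈ Finset.range j, c i • y i)| ≤ (1 / 2) ^ j := by
  have key : ∀ (j : ℕ) (p : ℕ → X), ∃ v, Bd j p v ∧ ∀ c : ℕ → ℝ, (∀ i, |c i| ≤ 1) → ∀ x ∈ P j,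
      |(F x).1 (∑ i ∈ Finset.range j, c i • p i + β x • v) -
        (B.T (β x) (F x)).1 (∑ i ∈ Finset.range j, c i • p i)| ≤ (1 / 2) ^ j := by
    intro j p
    have h1 := B.eventually_close (E := (ℕ → ℝ) × E)
      (K := (Set.univ.pi fun _ => Set.Icc (-1) 1) ×ˢ P j)
      ((isCompact_univ_pi fun _ => isCompact_Icc).prod (hP j)) (β := fun z => β z.2)
      (by fun_prop) (F := fun z => F z.2)
      (fun x ε hε => continuous_snd.tendsto x (hF x.2 ε hε))
      (ω := fun z => ∑ i ∈ Finset.range j, z.1 i • p i) (by fun_prop) (ε := (1 / 2) ^ j)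
      (by positivity)
    obtain ⟨v, hv1, hv2⟩ := ((hBd j p).and h1).exists
    exact ⟨v, hv1, fun c hc x hx => hv2 (c, x) ⟨fun i _ => abs_le.1 (hc i), hx⟩⟩
  obtain ⟨y, hy⟩ := seq_choice key
  refine ⟨y, fun j => ?_, fun j c hc x hx => ?_⟩ <;> obtain ⟨p, hp1, hp2, hp3⟩ := hy j
  · exact hBd' j p y _ hp1 hp2
  · have h2 : ∑ i ∈ Finset.range j, c i • p i = ∑ i ∈ Finset.range j, c i • y i :=
      Finset.sum_congr rfl fun i hi => by rw [hp1 i (Finset.mem_range.1 hi)]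
    rw [← h2]
    exact hp3 c hc x hx

end BlockUltra
end Selection

/-! ### Embedding `ℓ₁` -/

section EllOne
open Lip1
variable {X : Type*} [NormedAddCommGroup X] [NormedSpace ℝ X] {e : ℕ → X}

/-- A bounded sequence with a lower `ℓ₁` estimate on finite sums spans `ℓ₁`. -/
theorem exists_embedding_of_lower [CompleteSpace X] {z : ℕ → X} {C c : ℝ} (hc : 0 < c)
    (hz : ∀ i, ‖z i‖ ≤ C)
    (hlow : ∀ (n : ℕ) (a : ℕ → ℝ), c * ∑ i ∈ Finset.range n, |a i| ≤
      ‖∑ i ∈ Finset.range n, a i • z i‖) :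
    ∃ T : (lp (fun _ : ℕ => ℝ) 1) →L[ℝ] X, ∃ c : ℝ, 0 < c ∧ ∀ v, c * ‖v‖ ≤ ‖T v‖ := by
  have hs : ∀ v : lp (fun _ : ℕ => ℝ) 1, HasSum (fun i => |v i|) ‖v‖ := fun v => by
    simpa using lp.hasSum_norm (p := 1) (by simp) v
  have hle : ∀ (v : lp (fun _ : ℕ => ℝ) 1) i, ‖v i • z i‖ ≤ C * |v i| := fun v i => by
    rw [norm_smul, Real.norm_eq_abs, mul_comm]
    exact mul_le_mul_of_nonneg_right (hz i) (abs_nonneg _)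
  have hsum : ∀ v : lp (fun _ : ℕ => ℝ) 1, Summable fun i => v i • z i := fun v =>
    Summable.of_norm_bounded ((hs v).summable.mul_left C) (hle v)
  let L : lp (fun _ : ℕ => ℝ) 1 →ₗ[ℝ] X :=
    { toFun := fun v => ∑' i, v i • z i
      map_add' := fun v w => by
        rw [← (hsum v).tsum_add (hsum w)]
        exact tsum_congr fun i => by simp [add_smul]
      map_smul' := fun r v => by
        rw [RingHom.id_apply, ← (hsum v).tsum_const_smul r]
        exact tsum_congr fun i => by simp [mul_smul] }
  refine ⟨L.mkContinuous C fun v => ?_, c, hc, fun v => ?_⟩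
  · exact tsum_of_norm_bounded ((hs v).mul_left C) (hle v)
  · refine le_of_tendsto_of_tendsto' ((hs v).tendsto_sum_nat.const_mul c)
      (hsum v).hasSum.tendsto_sum_nat.norm fun n => hlow n _

namespace BlockUltra
variable (B : BlockUltra e)

theorem T_nrm_zero (hB : B.nu = 1) {t : ℝ} (ht : 0 ≤ t) : (B.T t (nrm X)).1 0 = t := by
  rcases ht.eq_or_lt with rfl | ht
  · rw [T_zero]; exact norm_zero
  · have h1 := B.dil_T t ht 1 (nrm X)
    rw [dil_nrm, mul_one] at h1
    rw [← h1]
    have h2 : (B.T 1 (nrm X)).1 0 = 1 := hB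
    simp [dil, h2]

/-- If the operators of a normalized block ultrafilter compose like those of the unit vector basis of
`ℓ₁`, then a sequence selected from it is equivalent to that basis. -/
theorem exists_embedding [CompleteSpace X] (hB : B.nu = 1)
    (hT : ∀ a b : ℝ, B.T a (B.T b (nrm X)) = B.T (|a| + |b|) (nrm X)) :
    ∃ T : (lp (fun _ : ℕ => ℝ) 1) →L[ℝ] X, ∃ c : ℝ, 0 < c ∧ ∀ v, c * ‖v‖ ≤ ‖T v‖ := by
  obtain ⟨y, hy2, hy⟩ := B.select (E := ℝ × ℝ) (P := fun _ => Set.Icc (-1) 1 ×ˢ Set.Icc 0 1)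
    (fun _ => isCompact_Icc.prod isCompact_Icc) (β := Prod.fst) continuous_fst
    (F := fun z => B.T z.2 (nrm X))
    (fun x ε hε => by
      filter_upwards [continuous_snd.tendsto x (Metric.ball_mem_nhds _ hε)] with x' hx' w
      have h1 := B.T_sub_le x'.2 x.2 (F := nrm X) (G := nrm X) (c := 0) (by simp) w
      rw [hB, mul_one, add_zero] at h1
      exact h1.trans (le_of_lt hx'))
    (Bd := fun _ _ v => ‖v‖ ≤ 2)
    (fun _ _ => (B.tendsto_nu.eventually_lt_const (by rw [hB]; norm_num)).mono fun v hv => hv.le)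
    (fun _ _ _ _ _ h => h)
  have claim : ∀ (n K : ℕ) (a c : ℕ → ℝ), (∀ i, |c i| ≤ 1) → ∑ i ∈ Finset.range n, |a i| ≤ 1 →
      |‖∑ i ∈ Finset.range K, c i • y i + ∑ i ∈ Finset.range n, a i • y (K + i)‖ -
        (B.T (∑ i ∈ Finset.range n, |a i|) (nrm X)).1 (∑ i ∈ Finset.range K, c i • y i)|
        ≤ 2 * (1 / 2) ^ K := by
    intro n
    induction n with
    | zero =>
      intro K a c _ _
      rw [Finset.sum_range_zero, Finset.sum_range_zero, T_zero, add_zero]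
      simp [nrm]
    | succ n ih =>
      intro K a c hc ha
      rw [Finset.sum_range_succ'] at ha
      have hs0 : 0 ≤ ∑ i ∈ Finset.range n, |a (i + 1)| :=
        Finset.sum_nonneg fun _ _ => abs_nonneg _
      have ha0 : |a 0| ≤ 1 := by linarith
      have h1 := ih (K + 1) (fun i => a (i + 1)) (Function.update c K (a 0))
        (fun i => by
          rcases eq_or_ne i K with rfl | hi
          · simpa using ha0
          · simpa [hi] using hc i)
        (by linarith [abs_nonneg (a 0)])
      have h2 := hy K c hc (a 0, ∑ i ∈ Finset.range n, |a (i + 1)|)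
        ⟨abs_le.1 ha0, hs0, by dsimp only; linarith [abs_nonneg (a 0)]⟩
      have h3 : ∑ i ∈ Finset.range (K + 1), Function.update c K (a 0) i • y i
          = ∑ i ∈ Finset.range K, c i • y i + a 0 • y K := by
        rw [Finset.sum_range_succ, Function.update_self]
        congr 1
        refine Finset.sum_congr rfl fun i hi => ?_
        rw [Function.update_of_ne (Finset.mem_range.1 hi).ne]
      have h4 : ∑ i ∈ Finset.range K, c i • y i + ∑ i ∈ Finset.range (n + 1), a i • y (K + i)
          = ∑ i ∈ Finset.range K, c i • y i + a 0 • y K +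
            ∑ i ∈ Finset.range n, a (i + 1) • y (K + 1 + i) := by
        rw [Finset.sum_range_succ', add_zero, add_assoc]
        congr 1
        rw [add_comm]
        congr 1
        refine Finset.sum_congr rfl fun i _ => ?_
        rw [show K + (i + 1) = K + 1 + i by omega]
      rw [h3] at h1
      dsimp only at h2
      rw [hT, abs_of_nonneg hs0] at h2
      rw [h4, Finset.sum_range_succ', add_comm _ |a 0|]
      rw [pow_succ] at h1
      rw [abs_le] at *
      constructor <;> linarith [h1.1, h1.2, h2.1, h2.2]
  refine exists_embedding_of_lower (z := fun i => y (2 + i)) (C := 2) (c := 1 / 2) (by norm_num)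
    (fun i => hy2 _) fun n a => ?_
  have hs0 : 0 ≤ ∑ i ∈ Finset.range n, |a i| := Finset.sum_nonneg fun _ _ => abs_nonneg _
  rcases hs0.eq_or_lt with h | hs
  · rw [← h]; simp
  -- after rescaling, the absolute values of the coefficients sum to one
  set s := ∑ i ∈ Finset.range n, |a i| with hs_def
  have h1 : ∑ i ∈ Finset.range n, |s⁻¹ * a i| = 1 := by
    simp only [abs_mul, abs_of_pos (inv_pos.2 hs)]
    rw [← Finset.mul_sum, ← hs_def, inv_mul_cancel₀ hs.ne']
  have h2 := claim n 2 (fun i => s⁻¹ * a i) 0 (by simp) h1.le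
  rw [h1] at h2
  simp only [Pi.zero_apply, zero_smul, Finset.sum_const_zero, zero_add] at h2
  rw [B.T_nrm_zero hB zero_le_one] at h2
  simp only [mul_smul] at h2
  rw [← Finset.smul_sum, norm_smul, Real.norm_of_nonneg (inv_pos.2 hs).le] at h2
  have h3 := (abs_le.1 h2).1
  have h4 : 1 / 2 ≤ s⁻¹ * ‖∑ i ∈ Finset.range n, a i • y (2 + i)‖ := by
    norm_num at h3 ⊢
    linarith
  rwa [inv_mul_eq_div, le_div_iff₀ hs] at h4

end BlockUltra
end EllOne

/-! ### The initial block ultrafilter -/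

section Base
open Lip1
variable {X : Type*} [NormedAddCommGroup X] [NormedSpace ℝ X] {e : ℕ → X}

theorem exists_finite_support {n : ℕ} {v : X} (hv : v ∈ Submodule.span ℝ (e '' Set.Ici n)) :
    ∃ m, n < m ∧ v ∈ Submodule.span ℝ (e '' Set.Ico n m) := by
  obtain ⟨c, hc, rfl⟩ := (Finsupp.mem_span_image_iff_linearCombination ℝ).1 hv
  obtain ⟨N, hN⟩ := c.support.exists_nat_subset_range
  refine ⟨max N (n + 1), by omega, (Finsupp.mem_span_image_iff_linearCombination ℝ).2
    ⟨c, fun i hi => ⟨hc hi, ?_⟩, rfl⟩⟩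
  exact lt_of_lt_of_le (Finset.mem_range.1 (hN hi)) (le_max_left _ _)

/-- The starting point of the symmetrization: some block ultrafilter has differences of full limit
norm. It is a multiple of a nonprincipal limit of the normalized basis. -/
theorem exists_start [CompleteSpace X] (he : IsSchauderBasis e) :
    ∃ Z : BlockUltra e, (Z.T (1 / 2) (Z.T (-(1 / 2)) (nrm X))).1 0 = 1 := by
  obtain ⟨C, hC0, hC⟩ := exists_proj_const he
  have hn : ∀ i, ‖‖e i‖⁻¹ • e i‖ = 1 := fun i => by
    have := norm_ne_zero_iff.2 (basis_ne_zero he i)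
    rw [norm_smul, norm_inv, norm_norm, inv_mul_cancel₀ this]
  let B : BlockUltra e :=
    { U := (hyperfilter ℕ).map fun i => ‖e i‖⁻¹ • e i
      tail := fun n => by
        have h1 : ∀ᶠ i in (hyperfilter ℕ : Filter ℕ),
            ‖e i‖⁻¹ • e i ∈ Submodule.span ℝ (e '' Set.Ici n) := by
          filter_upwards [Nat.hyperfilter_le_atTop (eventually_ge_atTop n)] with i hi
          exact Submodule.smul_mem _ _ (Submodule.subset_span ⟨i, hi, rfl⟩)
        exact h1
      bdd := ⟨1, by
        have h1 : ∀ᶠ i in (hyperfilter ℕ : Filter ℕ), ‖‖e i‖⁻¹ • e i‖ ≤ 1 :=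
          Eventually.of_forall fun i => (hn i).le
        exact h1⟩ }
  have hnu : B.nu = 1 := by
    refine tendsto_nhds_unique B.tendsto_nu ?_
    change Tendsto _ (map _ _) _
    rw [tendsto_map'_iff]
    exact tendsto_const_nhds.congr fun i => (hn i).symm
  set δ := (B.T 1 (B.T (-1) (nrm X))).1 0 with hδ
  have hδ0 : 0 < δ := by
    have h1 : C⁻¹ * 1 ≤ δ := by
      have h2 := B.tendsto_nu
      rw [hnu] at h2
      refine le_of_tendsto_of_tendsto (h2.const_mul C⁻¹) (B.tendsto_T 1 _ 0) ?_
      filter_upwards [B.tail 0] with v hv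
      obtain ⟨m, -, hm⟩ := exists_finite_support hv
      rw [zero_add, one_smul]
      refine ge_of_tendsto (B.tendsto_T (-1) (nrm X) v) ?_
      filter_upwards [B.tail m] with v' hv'
      rw [inv_mul_le_iff₀ hC0]
      exact hC m v (Submodule.span_mono (Set.image_mono fun i hi => hi.2) hm) _
        (Submodule.smul_mem _ _ hv')
    have : 0 < C⁻¹ := inv_pos.2 hC0
    linarith
  refine ⟨B.conv (2 / δ) 0, ?_⟩
  have h1 : (B.T 1 (B.T (-1) (nrm X))).dil (1 / δ) (by positivity)
      = (B.conv (2 / δ) 0).T (1 / 2) ((B.conv (2 / δ) 0).T (-(1 / 2)) (nrm X)) := by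
    rw [B.dil_T, B.dil_T, dil_nrm, B.T_conv, B.T_conv, mul_zero, mul_zero, B.T_zero, B.T_zero]
    rw [show 1 / δ * 1 = 1 / 2 * (2 / δ) by ring, show 1 / δ * -1 = -(1 / 2) * (2 / δ) by ring]
  rw [← h1]
  simp only [dil, smul_zero, ← hδ]
  field_simp

end Base

/-! ### Spreading models -/

section SpreadingModel
open Lip1
variable {X : Type*} [NormedAddCommGroup X] [NormedSpace ℝ X] {e : ℕ → X}

/-- Completion of a seminormed real vector space. -/
theorem exists_completion {V : Type} [AddCommGroup V] [Module ℝ V] (p : Seminorm ℝ V) :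
    ∃ (S : Type) (_ : NormedAddCommGroup S) (_ : NormedSpace ℝ S) (_ : CompleteSpace S)
      (ι : V →ₗ[ℝ] S), ∀ v, ‖ι v‖ = p v := by
  let i1 : SeminormedAddCommGroup V := p.toAddGroupSeminorm.toSeminormedAddCommGroup
  let i2 : NormedSpace ℝ V := { norm_smul_le := fun c v => (map_smul_eq_mul p c v).le }
  exact ⟨UniformSpace.Completion V, inferInstance, inferInstance, inferInstance,
    (UniformSpace.Completion.toComplₗᵢ (𝕜 := ℝ) (E := V)).toLinearMap,
    fun v => UniformSpace.Completion.norm_coe v⟩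

/-- A bounded sequence has a limit norm along its shifts, realized in a Banach space. -/
theorem exists_limit_space {y : ℕ → X} (hy : ∀ j, ‖y j‖ ≤ 1) :
    ∃ (S : Type) (_ : NormedAddCommGroup S) (_ : NormedSpace ℝ S) (_ : CompleteSpace S)
      (s : ℕ → S), ∀ (n : ℕ) (a : ℕ → ℝ),
        Tendsto (fun k => ‖∑ i ∈ Finset.range n, a i • y (k + i)‖) (hyperfilter ℕ : Filter ℕ)
          (𝓝 ‖∑ i ∈ Finset.range n, a i • s i‖) := by
  let ℓ : ℕ → (ℕ →₀ ℝ) →ₗ[ℝ] X := fun k => Finsupp.linearCombination ℝ fun i => y (k + i)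
  have hl : ∀ f, Tendsto (fun k => ‖ℓ k f‖) (hyperfilter ℕ : Filter ℕ)
      (𝓝 (limUnder (hyperfilter ℕ : Filter ℕ) fun k => ‖ℓ k f‖)) := fun f => by
    refine ultra_tendsto (hyperfilter ℕ) _ (R := ∑ i ∈ f.support, |f i|)
      (Eventually.of_forall fun k => ?_)
    rw [abs_norm, Finsupp.linearCombination_apply, Finsupp.sum]
    refine (norm_sum_le _ _).trans (Finset.sum_le_sum fun i _ => ?_)
    rw [norm_smul, Real.norm_eq_abs]
    exact mul_le_of_le_one_right (abs_nonneg _) (hy _)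
  let p : Seminorm ℝ (ℕ →₀ ℝ) := Seminorm.of
    (fun f => limUnder (hyperfilter ℕ : Filter ℕ) fun k => ‖ℓ k f‖)
    (fun f g => le_of_tendsto_of_tendsto' (hl (f + g)) ((hl f).add (hl g)) fun k => by
      rw [map_add]; exact norm_add_le _ _)
    (fun c f => tendsto_nhds_unique (hl (c • f)) (((hl f).const_mul ‖c‖).congr fun k => by
      rw [map_smul, norm_smul]))
  obtain ⟨S, i1, i2, i3, ι, hι⟩ := exists_completion p
  refine ⟨S, i1, i2, i3, fun i => ι (Finsupp.single i 1), fun n a => ?_⟩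
  have h1 : ∑ i ∈ Finset.range n, a i • ι (Finsupp.single i 1)
      = ι (∑ i ∈ Finset.range n, a i • Finsupp.single i 1) := by simp only [map_sum, map_smul]
  rw [h1, hι]
  refine (hl (∑ i ∈ Finset.range n, a i • Finsupp.single i 1)).congr fun k => ?_
  simp [ℓ, map_sum]

/-- A sequence of successive vectors with respect to `e` is a block basis. -/
theorem isBlockBasis_of_mem {y : ℕ → X} (hy : ∀ j, y j ≠ 0) {M : ℕ → ℕ} (hM : StrictMono M)
    (hyM : ∀ j, y j ∈ Submodule.span ℝ (e '' Set.Ico (M j) (M (j + 1)))) : IsBlockBasis e y := by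
  choose c hc hcy using fun j => (Finsupp.mem_span_image_iff_linearCombination ℝ).1 (hyM j)
  refine ⟨fun j => Finset.Ico (M j) (M (j + 1)),
    fun i => c (Classical.epsilon fun j => i ∈ Finset.Ico (M j) (M (j + 1))) i,
    fun j => Finset.nonempty_Ico.2 (hM j.lt_succ_self), fun j p hp q hq => ?_, fun j => ?_, hy⟩
  · exact (Finset.mem_Ico.1 hp).2.trans_le (Finset.mem_Ico.1 hq).1
  · rw [← hcy j, Finsupp.linearCombination_apply, Finsupp.sum_of_support_subset
      (s := Finset.Ico (M j) (M (j + 1))) _ (fun i hi => by simpa using hc j hi) _ (by simp)]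
    refine Finset.sum_congr rfl fun i hi => ?_
    have h1 : i ∈ Finset.Ico _ _ := Classical.epsilon_spec
      (p := fun j => i ∈ Finset.Ico (M j) (M (j + 1))) ⟨j, hi⟩
    set j' := Classical.epsilon fun j => i ∈ Finset.Ico (M j) (M (j + 1))
    rw [Finset.mem_Ico] at hi h1
    have h2 : j = j' := by
      rcases lt_trichotomy j j' with h | h | h
      · have := hM.monotone (Nat.succ_le_of_lt h)
        simp only [Nat.succ_eq_add_one] at this
        omega
      · exact h
      · have := hM.monotone (Nat.succ_le_of_lt h)
        simp only [Nat.succ_eq_add_one] at this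
        omega
    exact congrArg (fun l => c l i • e i) h2

namespace BlockUltra

/-- A block ultrafilter with limit norm one can be replaced by one living on the unit sphere. -/
theorem exists_normalized (B : BlockUltra e) (hB : B.nu = 1) :
    ∃ B' : BlockUltra e, (∀ᶠ v in (B'.U : Filter X), ‖v‖ = 1) ∧ ∀ a F, B'.T a F = B.T a F := by
  have hpos : ∀ᶠ v in (B.U : Filter X), ‖v‖ ≠ 0 :=
    (B.tendsto_nu.eventually_const_lt (by rw [hB]; norm_num : (0 : ℝ) < B.nu)).mono
      fun v hv => hv.ne'
  have h1 : ∀ᶠ v in (B.U : Filter X), ‖‖v‖⁻¹ • v‖ = 1 := hpos.mono fun v hv => by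
    rw [norm_smul, norm_inv, norm_norm, inv_mul_cancel₀ hv]
  let B' : BlockUltra e :=
    { U := B.U.map fun v => ‖v‖⁻¹ • v
      tail := fun n => by
        have h2 : ∀ᶠ v in (B.U : Filter X), ‖v‖⁻¹ • v ∈ Submodule.span ℝ (e '' Set.Ici n) :=
          (B.tail n).mono fun v hv => Submodule.smul_mem _ _ hv
        exact h2
      bdd := ⟨1, by
        have h2 : ∀ᶠ v in (B.U : Filter X), ‖‖v‖⁻¹ • v‖ ≤ 1 := h1.mono fun v hv => hv.le
        exact h2⟩ }
  refine ⟨B', h1, fun a F => Lip1.ext fun w => B'.T_eq ?_⟩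
  change Tendsto _ (map _ _) _
  rw [tendsto_map'_iff]
  refine tendsto_of_tendsto_of_dist (B.tendsto_T a F w) ?_
  have h2 : Tendsto (fun v => |a| * |‖v‖ - 1|) (B.U : Filter X) (𝓝 0) := by
    have := ((B.tendsto_nu.sub_const 1).abs.const_mul |a|)
    simpa [hB] using this
  refine squeeze_zero' (Eventually.of_forall fun v => dist_nonneg) ?_ h2
  filter_upwards [hpos] with v hv
  rw [Real.dist_eq]
  refine (F.2 _ _).trans (le_of_eq ?_)
  have h3 : w + a • v - (w + a • ‖v‖⁻¹ • v) = (a * ((‖v‖ - 1) * ‖v‖⁻¹)) • v := by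
    rw [sub_mul, mul_inv_cancel₀ hv, mul_sub, one_mul, sub_smul, mul_one, mul_smul a]
    abel
  rw [h3, norm_smul, Real.norm_eq_abs, abs_mul, abs_mul, abs_inv, abs_norm]
  field_simp

/-- The iterated limit `w ↦ lim_{v₀} ⋯ lim_{v_{n-1}} ‖w + a₀ v₀ + ⋯ + a_{n-1} v_{n-1}‖`. -/
def Lf (B : BlockUltra e) : ℕ → (ℕ → ℝ) → Lip1 X
  | 0, _ => nrm X
  | n + 1, a => B.T (a 0) (Lf B n fun i => a (i + 1))

theorem Lf_sub_le (B : BlockUltra e) (n : ℕ) (a b : ℕ → ℝ) (w : X) :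
    |(B.Lf n a).1 w - (B.Lf n b).1 w| ≤ (∑ i ∈ Finset.range n, |a i - b i|) * B.nu := by
  induction n generalizing a b w with
  | zero => simp [Lf]
  | succ n ih =>
    rw [Finset.sum_range_succ', add_comm (Finset.sum _ _), add_mul]
    exact B.T_sub_le _ _ (ih (fun i => a (i + 1)) fun i => b (i + 1)) w

end BlockUltra

/-- `w` is a combination of `y 0, …, y (j - 1)` with coefficients in `[-1, 1]`. -/
def InCube (y : ℕ → X) (j : ℕ) (w : X) : Prop :=
  ∃ c : ℕ → ℝ, (∀ i, |c i| ≤ 1) ∧ w = ∑ i ∈ Finset.range j, c i • y i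

theorem InCube.zero (y : ℕ → X) (j : ℕ) : InCube y j 0 := ⟨0, by simp, by simp⟩

theorem InCube.succ {y : ℕ → X} {j : ℕ} {w : X} (h : InCube y j w) {a : ℝ} (ha : |a| ≤ 1) :
    InCube y (j + 1) (w + a • y j) := by
  obtain ⟨c, hc, rfl⟩ := h
  refine ⟨Function.update c j a, fun i => ?_, ?_⟩
  · rcases eq_or_ne i j with rfl | hi
    · simpa using ha
    · simpa [hi] using hc i
  · rw [Finset.sum_range_succ, Function.update_self]
    congr 1
    refine Finset.sum_congr rfl fun i hi => ?_
    rw [Function.update_of_ne (Finset.mem_range.1 hi).ne]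

theorem InCube.mono {y : ℕ → X} {j j' : ℕ} {w : X} (h : InCube y j w) (hj : j ≤ j') :
    InCube y j' w := by
  induction j', hj using Nat.le_induction with
  | base => exact h
  | succ j' _ ih => simpa using ih.succ (a := 0) (by simp)

/-- If each application of the operators is approximately realized by the terms of `y`, then iterated
limits are approximated by norms of combinations of late terms of `y`. -/
theorem iterate_close (B : BlockUltra e) {y : ℕ → X}
    (hy : ∀ (j n : ℕ) (a : ℕ → ℝ) (w : X), n ≤ j → (∀ i, |a i| ≤ 1) → InCube y j w →
      |(B.Lf n fun i => a (i + 1)).1 (w + a 0 • y j) - (B.Lf (n + 1) a).1 w| ≤ (1 / 2) ^ j) :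
    ∀ (n K : ℕ) (a : ℕ → ℝ) (k : ℕ → ℕ) (w : X), n ≤ K → (∀ i, |a i| ≤ 1) → InCube y K w →
      (∀ i < n, K ≤ k i) → (∀ i j, i < j → j < n → k i < k j) →
      |‖w + ∑ i ∈ Finset.range n, a i • y (k i)‖ - (B.Lf n a).1 w| ≤ 2 * (1 / 2) ^ K := by
  intro n
  induction n with
  | zero =>
    intro K a k w _ _ _ _ _
    simp [BlockUltra.Lf, nrm]
  | succ n ih =>
    intro K a k w hK ha hw hkK hk
    have hk0 := hkK 0 n.succ_pos
    have h1 := hy (k 0) n a w (by omega) ha (hw.mono hk0)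
    have h2 := ih (k 0 + 1) (fun i => a (i + 1)) (fun i => k (i + 1)) (w + a 0 • y (k 0))
      (by omega) (fun i => ha _) ((hw.mono hk0).succ (ha 0))
      (fun i hi => hk 0 (i + 1) (by omega) (by omega))
      (fun i j hij hj => hk _ _ (by omega) (by omega))
    have h3 : w + ∑ i ∈ Finset.range (n + 1), a i • y (k i) = w + a 0 • y (k 0) +
        ∑ i ∈ Finset.range n, a (i + 1) • y (k (i + 1)) := by
      rw [Finset.sum_range_succ']; abel
    have h4 : (1 / 2 : ℝ) ^ k 0 ≤ (1 / 2) ^ K :=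
      pow_le_pow_of_le_one (by norm_num) (by norm_num) hk0
    rw [h3]
    rw [pow_succ] at h2
    rw [abs_le] at *
    constructor <;> linarith [h1.1, h1.2, h2.1, h2.2]

/-- The Brunel–Sucheston construction: the iterated limits of a normalized block ultrafilter are the
norm of a spreading model of a normalized block basis, so the hypothesis on spreading models
passes to block ultrafilters. -/
theorem pairHyp_of_spreading [CompleteSpace X] (he : IsSchauderBasis e)
    (h : ∀ y : ℕ → X, IsBlockBasis e y → (∀ j, ‖y j‖ = 1) →
      ∀ (S : Type) [NormedAddCommGroup S] [NormedSpace ℝ S] [CompleteSpace S]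
        (s : ℕ → S), IsSpreadingModel y s → ‖s 0 + s 1‖ = 2) : PairHyp e := by
  intro B₀ hB₀
  obtain ⟨B, hB1, hBT⟩ := B₀.exists_normalized hB₀
  have hB : B.nu = 1 := by
    rw [← hB₀, BlockUltra.nu, BlockUltra.ty, hBT]; rfl
  obtain ⟨C, hC0, hC⟩ := exists_proj_const he
  have hb : ∀ (m : ℕ) (x : X), ∃ m', m < m' ∧ (x ∈ Submodule.span ℝ (e '' Set.Ici m) →
      x ∈ Submodule.span ℝ (e '' Set.Ico m m')) := by
    intro m x
    by_cases hx : x ∈ Submodule.span ℝ (e '' Set.Ici m)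
    · obtain ⟨m', h1, h2⟩ := exists_finite_support hx
      exact ⟨m', h1, fun _ => h2⟩
    · exact ⟨m + 1, m.lt_succ_self, fun h => absurd h hx⟩
  choose b hb1 hb2 using hb
  -- `M j p` is the place where the `j`-th block may start when `p` lists the previous blocks
  let M : ℕ → (ℕ → X) → ℕ := fun n p => Nat.rec 0 (fun j m => b m (p j)) n
  have hMs : ∀ j p, M (j + 1) p = b (M j p) (p j) := fun j p => rfl
  have hMc : ∀ j (p p' : ℕ → X), (∀ i < j, p i = p' i) → M j p = M j p' := by
    intro j p p'
    induction j with
    | zero => intro _; rfl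
    | succ j ih =>
      intro hp
      rw [hMs, hMs, ih fun i hi => hp i (by omega), hp j (by omega)]
  obtain ⟨y, hyB, hy⟩ := B.select (E := ℕ × (ℕ → ℝ))
    (P := fun j => Set.Iic j ×ˢ Set.univ.pi fun _ => Set.Icc (-1) 1)
    (fun j => (Set.finite_Iic j).isCompact.prod (isCompact_univ_pi fun _ => isCompact_Icc))
    (β := fun z => z.2 0) (by fun_prop) (F := fun z => B.Lf z.1 fun i => z.2 (i + 1))
    (by
      rintro ⟨n, a⟩ ε hε
      have h1 : Tendsto (fun z : ℕ × (ℕ → ℝ) => ∑ i ∈ Finset.range n, |z.2 (i + 1) - a (i + 1)|)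
          (𝓝 (n, a)) (𝓝 0) := by
        have h2 : Continuous fun z : ℕ × (ℕ → ℝ) =>
          ∑ i ∈ Finset.range n, |z.2 (i + 1) - a (i + 1)| := by fun_prop
        have h3 := h2.tendsto (n, a)
        simpa using h3
      have h4 : ∀ᶠ z : ℕ × (ℕ → ℝ) in 𝓝 (n, a), z.1 = n :=
        (continuous_fst.tendsto (n, a)).eventually (show ∀ᶠ m in 𝓝 n, m = n by simp)
      filter_upwards [h1.eventually_lt_const hε, h4] with z hz hzn w
      have h5 := B.Lf_sub_le n (fun i => z.2 (i + 1)) (fun i => a (i + 1)) w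
      rw [hB, mul_one] at h5
      rw [hzn]
      exact h5.trans hz.le)
    (Bd := fun j p v => ‖v‖ = 1 ∧ v ∈ Submodule.span ℝ (e '' Set.Ici (M j p)))
    (fun j p => hB1.and (B.tail _))
    (fun j p p' v hp hv => by rw [← hMc j p p' hp]; exact hv)
  have hy1 : ∀ j, ‖y j‖ = 1 := fun j => (hyB j).1
  have hMmono : StrictMono fun j => M j y := strictMono_nat_of_lt_succ fun j => hb1 _ _
  have hyM : ∀ j, y j ∈ Submodule.span ℝ (e '' Set.Ico (M j y) (M (j + 1) y)) := fun j =>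
    hb2 _ _ (hyB j).2
  have hblock : IsBlockBasis e y := isBlockBasis_of_mem
    (fun j => norm_ne_zero_iff.1 (by rw [hy1]; exact one_ne_zero)) hMmono hyM
  have hclose := iterate_close B (y := y) (by
    rintro j n a w hn ha ⟨c, hc, rfl⟩
    exact hy j c hc (n, a) ⟨hn, fun i _ => abs_le.1 (ha i)⟩)
  obtain ⟨S, i1, i2, i3, s, hs⟩ := exists_limit_space (y := y) fun j => (hy1 j).le
  have hLf : ∀ (n : ℕ) (a : ℕ → ℝ), (∀ i, |a i| ≤ 1) →
      ‖∑ i ∈ Finset.range n, a i • s i‖ = (B.Lf n a).1 0 := by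
    intro n a ha
    refine tendsto_nhds_unique (hs n a) (tendsto_iff_norm_sub_tendsto_zero.2 ?_)
    have h1 : Tendsto (fun K : ℕ => 2 * (1 / 2 : ℝ) ^ K) (hyperfilter ℕ : Filter ℕ) (𝓝 0) := by
      have h2 := (tendsto_pow_atTop_nhds_zero_of_lt_one (r := (1 / 2 : ℝ)) (by norm_num)
        (by norm_num)).const_mul 2
      rw [mul_zero] at h2
      exact h2.mono_left Nat.hyperfilter_le_atTop
    refine squeeze_zero' (Eventually.of_forall fun _ => norm_nonneg _) ?_ h1
    filter_upwards [Nat.hyperfilter_le_atTop (eventually_ge_atTop n)] with K hK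
    have h2 := hclose n K a (fun i => K + i) 0 hK ha (InCube.zero y K) (fun i _ => by omega)
      (fun i j hij _ => by omega)
    rw [zero_add] at h2
    exact h2
  have hbasic : IsBasicSeq s := by
    refine ⟨C, fun m n hmn a => ?_⟩
    refine le_of_tendsto_of_tendsto' (hs m a) ((hs n a).const_mul C) fun k => ?_
    rw [← Finset.sum_range_add_sum_Ico _ hmn]
    refine hC (M (k + m) y) _ (Submodule.sum_mem _ fun i hi => Submodule.smul_mem _ _ ?_) _
      (Submodule.sum_mem _ fun i hi => Submodule.smul_mem _ _ ?_)
    · refine Submodule.span_mono (Set.image_mono fun l hl => ?_) (hyM (k + i))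
      have h1 : k + i + 1 ≤ k + m := by have := Finset.mem_range.1 hi; omega
      exact lt_of_lt_of_le hl.2 (hMmono.monotone h1)
    · refine Submodule.span_mono (Set.image_mono fun l hl => ?_) (hyM (k + i))
      have h1 : k + m ≤ k + i := by have := (Finset.mem_Ico.1 hi).1; omega
      exact le_trans (hMmono.monotone h1) hl.1
  have hspread : IsSpreadingModel y s := by
    refine ⟨hbasic, fun n => 3 * (1 / 2) ^ n, fun n => by positivity, ?_, ?_, ?_⟩
    · intro n m hnm
      have := pow_le_pow_of_le_one (a := (1 / 2 : ℝ)) (by norm_num) (by norm_num) hnm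
      dsimp only
      linarith
    · have h2 := (tendsto_pow_atTop_nhds_zero_of_lt_one (r := (1 / 2 : ℝ)) (by norm_num)
        (by norm_num)).const_mul 3
      rwa [mul_zero] at h2
    · intro n a ha k hk hkn
      let a' : ℕ → ℝ := fun i => if hi : i < n then a ⟨i, hi⟩ else 0
      let k' : ℕ → ℕ := fun i => if hi : i < n then k ⟨i, hi⟩ else 0
      have ha' : ∀ i, |a' i| ≤ 1 := fun i => by
        by_cases hi : i < n
        · simpa [a', hi] using ha ⟨i, hi⟩
        · simp [a', hi]
      have h1 := hclose n n a' k' 0 le_rfl ha' (InCube.zero y n)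
        (fun i hi => by simpa [k', hi] using hkn ⟨i, hi⟩)
        (fun i j hij hj => by
          have hi : i < n := by omega
          simpa [k', hi, hj] using hk (show (⟨i, hi⟩ : Fin n) < ⟨j, hj⟩ from hij))
      rw [← hLf n a' ha', zero_add, Finset.sum_range, Finset.sum_range] at h1
      simp only [a', k', Fin.is_lt, dif_pos, Fin.eta] at h1
      have h2 : (0 : ℝ) < (1 / 2) ^ n := by positivity
      linarith
  have h1 := h y hblock hy1 S s hspread
  have h2 := hLf 2 (fun _ => 1) (by simp)
  simp only [Finset.sum_range_succ, Finset.sum_range_zero, zero_add, one_smul] at h2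
  rw [h1] at h2
  rw [← hBT, ← hBT]
  exact h2.symm

end SpreadingModel

/-- If every spreading model `(s_n)` (in any Banach space) of every normalized block
basis of a Schauder basis `(e_i)` of a Banach space `X` satisfies `‖s 0 + s 1‖ = 2`,
then `X` contains a closed infinite-dimensional subspace isomorphic to `ℓ₁`, i.e.
there is a continuous linear embedding of `ℓ₁` into `X` which is bounded below. -/
theorem stmt0 {X : Type*} [NormedAddCommGroup X] [NormedSpace ℝ X] [CompleteSpace X]
    (e : ℕ → X) (he : IsSchauderBasis e)
    (h : ∀ y : ℕ → X, IsBlockBasis e y → (∀ j, ‖y j‖ = 1) →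
      ∀ (S : Type) [NormedAddCommGroup S] [NormedSpace ℝ S] [CompleteSpace S]
        (s : ℕ → S), IsSpreadingModel y s → ‖s 0 + s 1‖ = 2) :
    ∃ T : (lp (fun _ : ℕ => ℝ) 1) →L[ℝ] X, ∃ c : ℝ, 0 < c ∧ ∀ v, c * ‖v‖ ≤ ‖T v‖ := by
  obtain ⟨B, hB, hT⟩ := BlockUltra.exists_ell_one_type (pairHyp_of_spreading he h)
    (exists_start he)
  exact B.exists_embedding hB hT
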